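/- If there exists a continuous injective map from ℝP^{n-1} to S^{n-1}, then n ≤ 2. -/

import Mathlib

open Metric

/-- The antipodal identification on the unit sphere in `ℝⁿ`. -/
def antipodalSetoid (n : ℕ) : Setoid (sphere (0 : EuclideanSpace ℝ (Fin n)) 1) where
  r x y := (x : EuclideanSpace ℝ (Fin n)) = y ∨ (x : EuclideanSpace ℝ (Fin n)) = -y
  iseqv := by
    constructor
    · intro x; left; rfl
    · rintro x y (h | h)
      · left; exact h.symm
      · right; simp [h]
    · rintro x y z (h | h) (h' | h') <;> simp [h, h']

/-- Real projective space `ℝP^{n-1}`, as the quotient of `S^{n-1}` by the antipodal map. -/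
def RealProjSpace (n : ℕ) : Type := Quotient (antipodalSetoid n)

noncomputable instance (n : ℕ) : TopologicalSpace (RealProjSpace n) :=
  instTopologicalSpaceQuotient

open MeasureTheory Set Topology

/-- The radial projection onto the closed unit ball. -/
noncomputable def radialProj {E : Type*} [NormedAddCommGroup E] [NormedSpace ℝ E] (x : E) : E :=
  (max 1 ‖x‖)⁻¹ • x

section RadialProj

variable {E : Type*} [NormedAddCommGroup E] [NormedSpace ℝ E]

theorem radialProj_of_norm_le_one {x : E} (hx : ‖x‖ ≤ 1) : radialProj x = x := by
  simp [radialProj, hx]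

theorem norm_radialProj_of_one_le_norm {x : E} (hx : 1 ≤ ‖x‖) : ‖radialProj x‖ = 1 := by
  have : ‖x‖ ≠ 0 := by linarith
  simp [radialProj, norm_smul, hx, this]

theorem norm_radialProj_le_one (x : E) : ‖radialProj x‖ ≤ 1 := by
  rcases le_total ‖x‖ 1 with h | h
  · rwa [radialProj_of_norm_le_one h]
  · exact (norm_radialProj_of_one_le_norm h).le

theorem norm_radialProj_sub_le (x y : E) : ‖radialProj x - radialProj y‖ ≤ 2 * ‖x - y‖ := by
  have ha : 1 ≤ max 1 ‖x‖ := le_max_left _ _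
  have hb : 1 ≤ max 1 ‖y‖ := le_max_left _ _
  have hyb : ‖y‖ ≤ max 1 ‖y‖ := le_max_right _ _
  have hab : |max 1 ‖y‖ - max 1 ‖x‖| ≤ ‖x - y‖ := by
    rw [abs_sub_comm]
    rw [max_comm 1 ‖x‖, max_comm 1 ‖y‖]
    exact (abs_max_sub_max_le_abs ‖x‖ ‖y‖ 1).trans (abs_norm_sub_norm_le x y)
  unfold radialProj
  generalize max 1 ‖x‖ = a at *
  generalize max 1 ‖y‖ = b at *
  have ha0 : 0 < a := by linarith
  have hb0 : 0 < b := by linarith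
  have key : a⁻¹ • x - b⁻¹ • y = a⁻¹ • (x - y) + (a⁻¹ * (b⁻¹ * (b - a))) • y := by
    rw [smul_sub, sub_add, ← sub_smul]
    congr 2
    field_simp
    ring
  have ha1 : a⁻¹ ≤ 1 := inv_le_one_of_one_le₀ ha
  have hyb' : b⁻¹ * ‖y‖ ≤ 1 := by
    rw [inv_mul_le_iff₀ hb0]; linarith
  calc ‖a⁻¹ • x - b⁻¹ • y‖ ≤ ‖a⁻¹ • (x - y)‖ + ‖(a⁻¹ * (b⁻¹ * (b - a))) • y‖ := by
        rw [key]; exact norm_add_le _ _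
    _ = a⁻¹ * ‖x - y‖ + a⁻¹ * |b - a| * (b⁻¹ * ‖y‖) := by
        simp only [norm_smul, norm_mul, norm_inv, Real.norm_eq_abs, abs_of_pos ha0, abs_of_pos hb0]
        ring
    _ ≤ 1 * ‖x - y‖ + 1 * ‖x - y‖ * 1 := by gcongr
    _ = 2 * ‖x - y‖ := by ring

theorem continuous_radialProj : Continuous (radialProj : E → E) := by
  unfold radialProj
  refine Continuous.smul (Continuous.inv₀ (by fun_prop) fun x => ?_) continuous_id
  have : 1 ≤ max 1 ‖x‖ := le_max_left _ _
  linarith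

end RadialProj

section NoRetraction

variable {E : Type*} [NormedAddCommGroup E]

theorem det_one_add_pos_of_norm_lt_one [NormedSpace ℝ E] [FiniteDimensional ℝ E] (A : E →L[ℝ] E)
    (hA : ‖A‖ < 1) : 0 < (1 + A).det := by
  have hne : ∀ s ∈ Icc (0 : ℝ) 1, (1 + s • A).det ≠ 0 := by
    intro s hs h0
    have hlt : ‖-(s • A)‖ < 1 := by
      rw [norm_neg, norm_smul, Real.norm_of_nonneg hs.1]
      nlinarith [hs.2, norm_nonneg A]
    have hu : IsUnit (1 + s • A) := by
      simpa using isUnit_one_sub_of_norm_lt_one hlt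
    obtain ⟨B, hB⟩ := hu.exists_right_inv
    have hdet := congrArg ContinuousLinearMap.det hB
    rw [ContinuousLinearMap.det, ContinuousLinearMap.toLinearMap_mul, map_mul] at hdet
    rw [ContinuousLinearMap.det] at h0
    rw [h0, zero_mul] at hdet
    simp [ContinuousLinearMap.det] at hdet
  by_contra hneg
  have hcont : Continuous fun s : ℝ => (1 + s • A).det :=
    ContinuousLinearMap.continuous_det.comp (by fun_prop)
  have h1 : (1 + (1 : ℝ) • A).det ≤ 0 := by simpa using hneg
  have h0 : 0 ≤ (1 + (0 : ℝ) • A).det := by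
    simp [ContinuousLinearMap.det]
  obtain ⟨s, hs, hs0⟩ := intermediate_value_Icc' zero_le_one hcont.continuousOn ⟨h1, h0⟩
  exact hne s hs hs0

theorem exists_polynomial_eval_eq_det [NormedSpace ℝ E] [FiniteDimensional ℝ E] (A : E →L[ℝ] E) :
    ∃ p : Polynomial ℝ, p.degree < (Module.finrank ℝ E + 1 : ℕ) ∧
      ∀ t : ℝ, p.eval t = (1 + t • A).det := by
  let b := Module.finBasis ℝ E
  let M := LinearMap.toMatrix b b (A : E →ₗ[ℝ] E)
  let p : Polynomial ℝ := Matrix.det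
    ((Polynomial.X : Polynomial ℝ) • M.map Polynomial.C +
      (1 : Matrix (Fin _) (Fin _) ℝ).map Polynomial.C)
  have hp : p.natDegree ≤ Module.finrank ℝ E := by
    simpa only [Fintype.card_fin] using Polynomial.natDegree_det_X_add_C_le M 1
  refine ⟨p, (Polynomial.degree_le_natDegree (p := p)).trans_lt
    (by exact_mod_cast Nat.lt_succ_of_le hp), fun t => ?_⟩
  rw [ContinuousLinearMap.det, ← LinearMap.det_toMatrix b, ← Polynomial.coe_evalRingHom t,
    RingHom.map_det]
  congr 1
  ext i j
  rcases eq_or_ne i j with rfl | hij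
  · simp [M, LinearMap.toMatrix_apply]
    ring
  · simp [M, LinearMap.toMatrix_apply, hij]
    ring

/-- There is no `C¹` retraction of Euclidean space onto its unit sphere. -/
theorem not_contDiff_retraction [InnerProductSpace ℝ E] [FiniteDimensional ℝ E]
    {r : E → E} (hr : ContDiff ℝ 1 r) (hnorm : ∀ x, ‖r x‖ = 1) (hfix : ∀ x, ‖x‖ = 1 → r x = x) :
    False := by
  borelize E
  let μ : Measure E := Measure.addHaar
  let B : Set E := closedBall 0 1
  let h : E → E := fun x => r x - x
  have hh : ContDiff ℝ 1 h := hr.sub contDiff_id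
  have hh' : Continuous (fderiv ℝ h) := hh.continuous_fderiv one_ne_zero
  have hBc : IsCompact B := isCompact_closedBall 0 1
  obtain ⟨C₀, hC₀⟩ := hBc.exists_bound_of_continuousOn hh'.continuousOn
  let C : NNReal := C₀.toNNReal + 1
  have hC : ∀ x ∈ B, ‖fderiv ℝ h x‖₊ ≤ C := fun x hx => by
    rw [← NNReal.coe_le_coe]
    have h1 := hC₀ x hx
    have h2 := Real.le_coe_toNNReal C₀
    simp only [coe_nnnorm, C, NNReal.coe_add, NNReal.coe_one]
    linarith
  have hCpos : (0 : ℝ) < C := by positivity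
  have hlip : LipschitzOnWith C h B := Convex.lipschitzOnWith_of_nnnorm_fderiv_le (𝕜 := ℝ)
    (fun x _ => (hh.differentiable one_ne_zero) x) hC (convex_closedBall 0 1)
  -- the extension of `h` by zero outside the unit ball
  let k : E → E := fun x => h (radialProj x)
  have hk : ∀ x y, ‖k x - k y‖ ≤ 2 * C * ‖x - y‖ := fun x y => by
    have h1 := hlip.norm_sub_le (x := radialProj x) (y := radialProj y)
      (by simpa [B] using norm_radialProj_le_one x) (by simpa [B] using norm_radialProj_le_one y)
    calc ‖k x - k y‖ ≤ C * ‖radialProj x - radialProj y‖ := h1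
      _ ≤ C * (2 * ‖x - y‖) := by gcongr; exact norm_radialProj_sub_le x y
      _ = 2 * C * ‖x - y‖ := by ring
  have hkB : ∀ x ∈ B, k x = h x := fun x hx => by
    simp only [k, radialProj_of_norm_le_one (show ‖x‖ ≤ 1 by simpa [B] using hx)]
  have hk0 : ∀ x, 1 ≤ ‖x‖ → k x = 0 := fun x hx => by
    simp only [k, h, hfix _ (norm_radialProj_of_one_le_norm hx), sub_self]
  let τ : ℝ := (2 * C + 1)⁻¹
  have hτ : 0 < τ := by positivity
  have hτ1 : τ * (2 * C) < 1 := by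
    simp only [τ]; rw [inv_mul_lt_iff₀ (by positivity)]; linarith
  have hτle : τ ≤ 1 := inv_le_one_of_one_le₀ (by linarith)
  have hder : ∀ (t : ℝ) (x : E), HasFDerivAt (fun x => x + t • h x) (1 + t • fderiv ℝ h x) x :=
    fun t x => (hasFDerivAt_id x).fun_add (((hh.differentiable one_ne_zero) x).hasFDerivAt.fun_const_smul t)
  have hdetcont : ∀ t : ℝ, Continuous fun x => (1 + t • fderiv ℝ h x).det := fun t =>
    ContinuousLinearMap.continuous_det.comp (by fun_prop)
  have hdetint : ∀ t : ℝ, IntegrableOn (fun x => (1 + t • fderiv ℝ h x).det) B μ := fun t =>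
    (hdetcont t).continuousOn.integrableOn_compact hBc
  -- for small `t`, the map `x ↦ x + t h(x)` is an injective map of the ball onto itself
  have hvol : ∀ t ∈ Ioo 0 τ, ∫ x in B, (1 + t • fderiv ℝ h x).det ∂μ = μ.real B := by
    rintro t ⟨ht0, htτ⟩
    have htk : t * (2 * C) < 1 := lt_of_le_of_lt (by gcongr) hτ1
    have hinj : InjOn (fun x => x + t • h x) B := by
      intro x hx y hy hxy
      simp only [← hkB x hx, ← hkB y hy] at hxy
      have e : x - y = t • (k y - k x) := by
        rw [smul_sub, sub_eq_sub_iff_add_eq_add, hxy, add_comm]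
      by_contra hne
      have hpos : 0 < ‖x - y‖ := norm_pos_iff.2 (sub_ne_zero.2 hne)
      have : ‖x - y‖ ≤ t * (2 * C) * ‖x - y‖ := by
        calc ‖x - y‖ = t * ‖k y - k x‖ := by
              conv_lhs => rw [e, norm_smul, Real.norm_of_nonneg ht0.le]
          _ ≤ t * (2 * C * ‖x - y‖) := by
              gcongr; rw [norm_sub_rev x y]; exact hk y x
          _ = _ := by ring
      nlinarith
    have himg : (fun x => x + t • h x) '' B = B := by
      apply Subset.antisymm
      · rintro _ ⟨x, hx, rfl⟩
        have hx1 : ‖x‖ ≤ 1 := by simpa [B] using hx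
        have e : x + t • h x = (1 - t) • x + t • r x := by simp only [h]; module
        simp only [B, mem_closedBall_zero_iff, e]
        calc ‖(1 - t) • x + t • r x‖ ≤ ‖(1 - t) • x‖ + ‖t • r x‖ := norm_add_le _ _
          _ = (1 - t) * ‖x‖ + t * 1 := by
            rw [norm_smul, norm_smul, hnorm, Real.norm_of_nonneg ht0.le,
              Real.norm_of_nonneg (by linarith)]
          _ ≤ 1 := by nlinarith
      · intro y hy
        have hcon : ContractingWith (NNReal.mk (t * (2 * C)) (by positivity)) fun x => y - t • k x := by
          refine ⟨by exact_mod_cast htk, LipschitzWith.of_dist_le_mul fun a b => ?_⟩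
          rw [dist_eq_norm, dist_eq_norm, sub_sub_sub_cancel_left, ← smul_sub, norm_smul,
            Real.norm_of_nonneg ht0.le, NNReal.coe_mk, mul_assoc, norm_sub_rev a b]
          gcongr
          exact hk b a
        obtain ⟨x, hx⟩ : ∃ x, y - t • k x = x := ⟨_, hcon.fixedPoint_isFixedPt⟩
        have hxB : x ∈ B := by
          by_contra hxB
          have hx1 : 1 ≤ ‖x‖ := by
            simp only [B, mem_closedBall_zero_iff, not_le] at hxB
            exact hxB.le
          rw [hk0 x hx1, smul_zero, sub_zero] at hx
          exact hxB (hx ▸ hy)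
        refine ⟨x, hxB, ?_⟩
        simp only [← hkB x hxB]
        nth_rw 1 [← hx]
        simp
    have hdetpos : ∀ x ∈ B, 0 < (1 + t • fderiv ℝ h x).det := fun x hx => by
      apply det_one_add_pos_of_norm_lt_one
      rw [norm_smul, Real.norm_of_nonneg ht0.le]
      have h1 : ‖fderiv ℝ h x‖ ≤ C := hC x hx
      nlinarith
    have hlin := lintegral_abs_det_fderiv_eq_addHaar_image μ hBc.measurableSet
      (fun x _ => (hder t x).hasFDerivWithinAt) hinj
    rw [himg] at hlin
    rw [integral_eq_lintegral_of_nonneg_ae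
      ((ae_restrict_iff' hBc.measurableSet).2 (.of_forall fun x hx => (hdetpos x hx).le))
      (hdetcont t).aestronglyMeasurable, Measure.real, ← hlin]
    congr 1
    refine setLIntegral_congr_fun hBc.measurableSet fun x hx => ?_
    simp only [abs_of_pos (hdetpos x hx)]
  -- both sides are polynomial in `t`, so the identity persists at `t = 1`
  have hvol1 : ∫ x in B, (1 + (1 : ℝ) • fderiv ℝ h x).det ∂μ = μ.real B := by
    let s : Finset ℕ := Finset.range (Module.finrank ℝ E + 1)
    let v : ℕ → ℝ := fun i => τ / (i + 2)
    have hv : InjOn v s := by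
      intro i _ j _ hij
      simp only [v] at hij
      field_simp at hij
      exact_mod_cast (add_right_cancel hij).symm
    have hvmem : ∀ i, v i ∈ Ioo 0 τ := fun i =>
      ⟨by positivity, div_lt_self hτ (by have : (0 : ℝ) ≤ i := i.cast_nonneg; linarith)⟩
    have hpoly : ∀ x, (1 + (1 : ℝ) • fderiv ℝ h x).det =
        ∑ i ∈ s, (1 + v i • fderiv ℝ h x).det * (Lagrange.basis s v i).eval 1 := fun x => by
      obtain ⟨p, hpdeg, hp⟩ := exists_polynomial_eval_eq_det (fderiv ℝ h x)
      rw [← hp, Lagrange.eq_interpolate (f := p) (s := s) hv (by simpa [s] using hpdeg),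
        Lagrange.interpolate_apply, Polynomial.eval_finsetSum]
      simp [hp]
    have hsum : ∑ i ∈ s, (Lagrange.basis s v i).eval 1 = 1 := by
      rw [← Polynomial.eval_finsetSum, Lagrange.sum_basis hv ⟨0, by simp [s]⟩,
        Polynomial.eval_one]
    simp_rw [hpoly]
    rw [integral_finsetSum _ fun i _ => (hdetint (v i)).mul_const _]
    simp_rw [integral_mul_const, hvol _ (hvmem _)]
    rw [← Finset.mul_sum, hsum, mul_one]
  -- but `r` takes values in the sphere, so its Jacobian vanishes
  have hzero : ∀ x, (1 + (1 : ℝ) • fderiv ℝ h x).det = 0 := by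
    intro x
    have hrx : HasFDerivAt r (1 + (1 : ℝ) • fderiv ℝ h x) x := by
      simpa [h] using hder 1 x
    generalize (1 + (1 : ℝ) • fderiv ℝ h x) = A at hrx
    have horth : ∀ w, inner ℝ (r x) (A w) = 0 := by
      have h1 := hrx.norm_sq
      have h2 : (fun y => ‖r y‖ ^ 2) = fun _ => (1 : ℝ) := by ext y; simp [hnorm]
      rw [h2] at h1
      intro w
      simpa using (DFunLike.congr_fun (h1.unique (hasFDerivAt_const _ _)) w)
    by_contra hne
    obtain ⟨w, hw⟩ := (LinearMap.equivOfDetNeZero (A : E →ₗ[ℝ] E) hne).surjective (r x)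
    have := horth w
    have hw' : A w = r x := hw
    rw [hw', real_inner_self_eq_norm_sq, hnorm] at this
    norm_num at this
  simp_rw [hzero] at hvol1
  rw [integral_zero] at hvol1
  exact (ENNReal.toReal_pos (measure_closedBall_pos μ 0 one_pos).ne'
    measure_closedBall_lt_top.ne).ne hvol1

end NoRetraction

section InvarianceOfDomain

variable {E : Type*} [NormedAddCommGroup E] [InnerProductSpace ℝ E] [FiniteDimensional ℝ E]

/-- A continuous map of the closed unit ball that is close to the identity has a zero. -/
theorem exists_eq_zero_of_norm_sub_le {H : E → E} (hH : ContinuousOn H (closedBall 0 1))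
    (hclose : ∀ x ∈ closedBall (0 : E) 1, ‖H x - x‖ ≤ 1 / 3) :
    ∃ x ∈ closedBall (0 : E) 1, H x = 0 := by
  by_contra! hne
  have hmem : ∀ x : E, radialProj x ∈ closedBall (0 : E) 1 := fun x => by
    simpa using norm_radialProj_le_one x
  let χ : E → ℝ := fun x => max 0 (min 1 (3 - 4 * ‖x‖))
  have hχ : Continuous χ := by fun_prop
  have hχ0 : ∀ x, 0 ≤ χ x := fun x => le_max_left _ _
  have hχ1 : ∀ x, χ x ≤ 1 := fun x => max_le zero_le_one (min_le_left _ _)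
  have hHc : Continuous fun x => H (radialProj x) :=
    hH.comp_continuous continuous_radialProj hmem
  -- `K₀` interpolates between `H` near the origin and the identity near the unit sphere
  let K₀ : E → E := fun x => x + χ x • (H (radialProj x) - radialProj x)
  have hK₀ : Continuous K₀ :=
    continuous_id.add (hχ.smul (hHc.sub continuous_radialProj))
  have hK₀id : ∀ x, 3 / 4 ≤ ‖x‖ → K₀ x = x := fun x hx => by
    have : χ x = 0 := max_eq_left (min_le_of_right_le (by linarith))
    simp [K₀, this]
  have hK₀ne : ∀ x, 0 < ‖K₀ x‖ := fun x => by
    rw [norm_pos_iff]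
    intro h0
    rcases le_or_gt ‖x‖ (1 / 2) with hx | hx
    · have h1 : χ x = 1 := by
        simp only [χ]; rw [min_eq_left (by linarith), max_eq_right zero_le_one]
      have h2 : radialProj x = x := radialProj_of_norm_le_one (by linarith)
      simp only [K₀, h1, h2, one_smul, add_sub_cancel] at h0
      exact hne x (by rw [mem_closedBall_zero_iff]; linarith) h0
    · have h1 : ‖χ x • (H (radialProj x) - radialProj x)‖ ≤ 1 * (1 / 3) := by
        rw [norm_smul, Real.norm_of_nonneg (hχ0 x)]
        exact mul_le_mul (hχ1 x) (hclose _ (hmem x)) (norm_nonneg _) zero_le_one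
      rw [← norm_neg, ← eq_neg_of_add_eq_zero_left h0] at h1
      linarith
  obtain ⟨K, hK, hKclose, hKid, -⟩ := hK₀.exists_contDiff_approx_and_eqOn 1 hK₀.norm hK₀ne
    (S := {x | 1 ≤ ‖x‖}) (U := {x | 3 / 4 < ‖x‖}) (isClosed_le continuous_const continuous_norm)
    ((isOpen_lt continuous_const continuous_norm).mem_nhdsSet.2 fun x (hx : 1 ≤ ‖x‖) => by
      simp only [mem_ofPred_eq]; linarith)
    (contDiffOn_id.congr fun x (hx : 3 / 4 < ‖x‖) => hK₀id x hx.le)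
  have hKne : ∀ x, K x ≠ 0 := fun x h0 => by
    have := hKclose x
    rw [h0, dist_zero_left] at this
    exact lt_irrefl _ this
  refine not_contDiff_retraction (r := fun x => ‖K x‖⁻¹ • K x) ?_ (fun x => ?_)
    fun x hx => ?_
  · exact ((hK.norm ℝ hKne).inv fun x => norm_ne_zero_iff.2 (hKne x)).smul hK
  · rw [norm_smul, norm_inv, norm_norm, inv_mul_cancel₀ (norm_ne_zero_iff.2 (hKne x))]
  · have : K x = x := (hKid (by simp [hx])).trans (hK₀id x (by linarith))
    simp [this, hx]

theorem image_closedBall_mem_nhds {f : E → E} (hf : ContinuousOn f (closedBall 0 1))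
    (hinj : InjOn f (closedBall 0 1)) : f '' closedBall 0 1 ∈ 𝓝 (f 0) := by
  borelize E
  let B : Set E := closedBall 0 1
  have : CompactSpace B := isCompact_iff_compactSpace.1 (isCompact_closedBall 0 1)
  have h0B : (0 : E) ∈ B := by simp [B]
  have hcomp : IsCompact (f '' B) := (isCompact_closedBall 0 1).image_of_continuousOn hf
  -- a continuous extension `G` of the inverse of `f`
  obtain ⟨G, hG⟩ := ContinuousMap.exists_extension
    (hf.domRestrict.isClosedEmbedding hinj.injective) (⟨Subtype.val, continuous_subtype_val⟩ : C(B, E))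
  have hGf : ∀ x ∈ B, G (f x) = x := fun x hx => DFunLike.congr_fun hG ⟨x, hx⟩
  obtain ⟨ε, hε, hGε⟩ : ∃ ε > 0, ∀ y, dist y (f 0) < ε → ‖G y‖ < 1 / 10 := by
    obtain ⟨ε, hε, h⟩ := Metric.continuous_iff.1 G.continuous (f 0) (1 / 10) (by norm_num)
    refine ⟨ε, hε, fun y hy => ?_⟩
    simpa [hGf 0 h0B] using h y hy
  by_contra hnhds
  obtain ⟨c, hcε, hc⟩ : ∃ c, dist c (f 0) < ε / 2 ∧ c ∉ f '' B := by
    by_contra! h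
    exact hnhds (Metric.mem_nhds_iff.2 ⟨ε / 2, by positivity, fun y hy => h y hy⟩)
  have hGc : ∀ y, ‖y - c‖ ≤ ε / 2 → ‖G y‖ < 1 / 10 := fun y hy => hGε y <| by
    have := dist_triangle y c (f 0)
    rw [dist_eq_norm y c] at this
    linarith
  obtain ⟨δ₀, hδ₀, hGδ₀⟩ : ∃ δ, 0 < δ ∧ ∀ y ∈ f '' B ∩ {y | ε / 2 ≤ ‖y - c‖}, δ ≤ ‖G y‖ := by
    refine (hcomp.inter_right (isClosed_le continuous_const (by fun_prop))).exists_forall_le'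
      G.continuous.norm.continuousOn ?_
    rintro _ ⟨⟨x, hx, rfl⟩, hxc⟩
    rw [hGf x hx, norm_pos_iff]
    rintro rfl
    simp only [mem_ofPred_eq, ← dist_eq_norm] at hxc
    rw [dist_comm] at hxc
    linarith
  let δ := min δ₀ (1 / 10)
  have hδ : 0 < δ := by positivity
  have hδ1 : δ ≤ 1 / 10 := min_le_right _ _
  have hδ₀' : δ ≤ δ₀ := min_le_left _ _
  obtain ⟨P, hP, hPG, -⟩ := G.continuous.exists_contDiff_approx 1
    (continuous_const (y := δ / 2)) (fun _ => by positivity)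
  -- a small vector `a` missed by `P` on the sphere around `c`
  obtain ⟨a, haδ, ha⟩ : ∃ a ∈ ball (0 : E) (δ / 2), a ∉ P '' sphere c (ε / 2) := by
    by_contra! h
    have hnull : (Measure.addHaar : Measure E) (P '' sphere c (ε / 2)) = 0 :=
      addHaar_image_eq_zero_of_differentiableOn_of_addHaar_eq_zero _
        (hP.differentiable one_ne_zero).differentiableOn
        (Measure.addHaar_sphere_of_ne_zero _ _ (by positivity))
    exact (measure_ball_pos Measure.addHaar (0 : E) (half_pos hδ)).ne'
      (measure_mono_null h hnull)
  have haδ' : ‖a‖ < δ / 2 := by simpa using haδ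
  have hPa : ∀ y, ‖(P y - a) - G y‖ < δ := fun y => by
    have h1 := hPG y
    rw [dist_eq_norm] at h1
    have h2 := norm_sub_le (P y - G y) a
    rw [sub_right_comm]
    linarith
  -- push the image of `f` radially away from the ball around `c`
  let Φ : E → E := fun y => c + max (ε / 2 / ‖y - c‖) 1 • (y - c)
  have hΦout : ∀ y, ε / 2 ≤ ‖y - c‖ → Φ y = y := fun y hy => by
    have : max (ε / 2 / ‖y - c‖) 1 = 1 := max_eq_right (div_le_one_of_le₀ hy (norm_nonneg _))
    simp [Φ, this]
  have hΦin : ∀ y, y ≠ c → ‖y - c‖ < ε / 2 → ‖Φ y - c‖ = ε / 2 := fun y hyc hy => by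
    have hpos : 0 < ‖y - c‖ := norm_pos_iff.2 (sub_ne_zero.2 hyc)
    have : max (ε / 2 / ‖y - c‖) 1 = ε / 2 / ‖y - c‖ := max_eq_left ((one_le_div hpos).2 hy.le)
    simp only [Φ, this, add_sub_cancel_left, norm_smul]
    rw [Real.norm_of_nonneg (by positivity)]
    field_simp
  have hfc : ∀ x ∈ B, f x ≠ c := fun x hx h => hc ⟨x, hx, h⟩
  obtain ⟨x, hx, hx0⟩ := exists_eq_zero_of_norm_sub_le (H := fun x => P (Φ (f x)) - a)
    (by
      refine (hP.continuous.comp_continuousOn ?_).sub continuousOn_const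
      have hsub : ContinuousOn (fun x => f x - c) (closedBall 0 1) := hf.sub continuousOn_const
      refine continuousOn_const.add (ContinuousOn.smul (ContinuousOn.sup ?_ continuousOn_const) hsub)
      exact continuousOn_const.div hsub.norm fun x hx => norm_ne_zero_iff.2
        (sub_ne_zero.2 (hfc x hx)))
    (fun x hx => by
      have h1 := hPa (Φ (f x))
      rcases le_or_gt (ε / 2) ‖f x - c‖ with hy | hy
      · simp only [hΦout _ hy, hGf x hx] at h1 ⊢
        linarith
      · have h2 := hGc _ (hΦin _ (hfc x hx) hy).le
        have h3 := hGc _ hy.le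
        rw [hGf x hx] at h3
        have h4 := norm_sub_le (P (Φ (f x)) - a) x
        have h5 := norm_add_le (P (Φ (f x)) - a - G (Φ (f x))) (G (Φ (f x)))
        rw [sub_add_cancel] at h5
        linarith)
  rcases le_or_gt (ε / 2) ‖f x - c‖ with hy | hy
  · have h1 := hPa (f x)
    simp only [hΦout _ hy] at hx0
    rw [hx0, zero_sub, norm_neg] at h1
    have := hGδ₀ (f x) ⟨⟨x, hx, rfl⟩, hy⟩
    linarith
  · exact ha ⟨Φ (f x), by simpa [dist_eq_norm] using hΦin _ (hfc x hx) hy, sub_eq_zero.1 hx0⟩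

/-- Invariance of domain, local form. -/
theorem image_mem_nhds_of_continuousOn_of_injOn {f : E → E} {U : Set E} {x : E} (hU : U ∈ 𝓝 x)
    (hf : ContinuousOn f U) (hinj : InjOn f U) : f '' U ∈ 𝓝 (f x) := by
  obtain ⟨ρ, hρ, hsub⟩ := Metric.nhds_basis_closedBall.mem_iff.1 hU
  have hmaps : MapsTo (fun z : E => x + ρ • z) (closedBall 0 1) U := fun z hz => hsub <| by
    rw [mem_closedBall_zero_iff] at hz
    rw [mem_closedBall, dist_eq_norm, add_sub_cancel_left, norm_smul, Real.norm_of_nonneg hρ.le]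
    nlinarith
  have h := image_closedBall_mem_nhds (f := fun z => f (x + ρ • z))
    (hf.comp (by fun_prop) hmaps) (fun z hz w hw hzw => by
      have := hinj (hmaps hz) (hmaps hw) hzw
      exact smul_right_injective E hρ.ne' (add_left_cancel this))
  rw [smul_zero, add_zero] at h
  refine Filter.mem_of_superset h ?_
  rintro _ ⟨z, hz, rfl⟩
  exact ⟨_, hmaps hz, rfl⟩

end InvarianceOfDomain

section AntipodalFibers

variable {E : Type*} [NormedAddCommGroup E] [InnerProductSpace ℝ E]

/-- The action of `{±1}` on the unit sphere by the antipodal map. -/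
@[reducible]
def antipodalAction : MulAction ℤˣ (sphere (0 : E) 1) where
  smul u x := if u = 1 then x else -x
  one_smul x := if_pos rfl
  mul_smul u v x := by
    rcases Int.units_eq_one_or u with rfl | rfl <;> rcases Int.units_eq_one_or v with rfl | rfl <;>
      simp [HSMul.hSMul]

variable {g : sphere (0 : E) 1 → sphere (0 : E) 1}

/-- A continuous self-map of the unit sphere whose fibers are pairs of antipodal points
is surjective. -/
theorem surjective_of_antipodal_fibers [FiniteDimensional ℝ E] (hE : 1 < Module.rank ℝ E)
    (hg : Continuous g) (hfib : ∀ x y, g x = g y ↔ x = y ∨ x = -y) : Function.Surjective g := by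
  have hconn := isConnected_sphere hE (0 : E) zero_le_one
  have : PreconnectedSpace (sphere (0 : E) 1) :=
    isPreconnected_iff_preconnectedSpace.1 hconn.isPreconnected
  have : Nonempty (sphere (0 : E) 1) := hconn.nonempty.to_subtype
  have : CompactSpace (sphere (0 : E) 1) := isCompact_iff_compactSpace.1 (isCompact_sphere 0 1)
  obtain ⟨G, hG⟩ := ContinuousMap.exists_extension
    (isClosed_sphere (x := (0 : E)) (ε := 1)).isClosedEmbedding_subtypeVal
    (⟨fun x => (g x : E), by fun_prop⟩ : C(sphere (0 : E) 1, E))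
  have hGg : ∀ x : sphere (0 : E) 1, G x = g x := fun x => DFunLike.congr_fun hG x
  -- the homogeneous extension of `g`
  let F : E → E := fun x => ‖x‖ • G (‖x‖⁻¹ • x)
  let ν : ∀ x : E, x ≠ 0 → sphere (0 : E) 1 := fun x hx =>
    ⟨‖x‖⁻¹ • x, by simp [norm_smul, hx]⟩
  have hFν : ∀ x (hx : x ≠ 0), F x = ‖x‖ • (g (ν x hx) : E) := fun x hx => by
    rw [← hGg]
  have hFnorm : ∀ x, x ≠ 0 → ‖F x‖ = ‖x‖ := fun x hx => by
    rw [hFν x hx, norm_smul, norm_norm, norm_eq_of_mem_sphere, mul_one]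
  have hFS : ∀ x : sphere (0 : E) 1, F x = g x := fun x => by
    simp [F, hGg]
  have hFcont : ContinuousOn F {0}ᶜ := by
    refine continuous_norm.continuousOn.smul (G.continuous.comp_continuousOn
      ((continuous_norm.continuousOn.inv₀ fun x hx => ?_).smul continuousOn_id))
    simpa using hx
  have hopen : IsOpen (range g) := by
    rw [isOpen_iff_mem_nhds]
    rintro _ ⟨x, rfl⟩
    let U : Set E := {y | 0 < inner ℝ (x : E) y}
    have hU0 : ∀ y ∈ U, y ≠ 0 := by
      rintro y hy rfl
      simp [U] at hy
    have hU : U ∈ 𝓝 (x : E) := (isOpen_lt continuous_const (by fun_prop)).mem_nhds (by simp)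
    have hinj : InjOn F U := by
      intro y hy z hz hyz
      have hy0 := hU0 y hy
      have hz0 := hU0 z hz
      have hnorm : ‖y‖ = ‖z‖ := by rw [← hFnorm y hy0, ← hFnorm z hz0, hyz]
      have hzn : ‖z‖ ≠ 0 := norm_ne_zero_iff.2 hz0
      rw [hFν y hy0, hFν z hz0, hnorm] at hyz
      rcases (hfib _ _).1 (Subtype.ext (smul_right_injective E hzn hyz)) with h | h
      · have h' : ‖y‖⁻¹ • y = ‖z‖⁻¹ • z := congrArg Subtype.val h
        rw [hnorm] at h'
        exact smul_right_injective E (inv_ne_zero hzn) h'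
      · have h' : ‖y‖⁻¹ • y = -(‖z‖⁻¹ • z) := congrArg Subtype.val h
        rw [hnorm, ← smul_neg] at h'
        have h'' : y = -z := smul_right_injective E (inv_ne_zero hzn) h'
        simp only [U, mem_ofPred_eq, h'', inner_neg_right] at hy hz
        linarith
    have hmem := image_mem_nhds_of_continuousOn_of_injOn hU
      (hFcont.mono fun y hy => hU0 y hy) hinj
    rw [hFS] at hmem
    filter_upwards [continuous_subtype_val.continuousAt.preimage_mem_nhds hmem]
    rintro z ⟨u, hu, huz⟩
    have hu0 := hU0 u hu
    have hu1 : ‖u‖ = 1 := by rw [← hFnorm u hu0, huz, norm_eq_of_mem_sphere]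
    refine ⟨ν u hu0, Subtype.ext ?_⟩
    rw [← huz, hFν u hu0, hu1, one_smul]
  rw [← range_eq_univ]
  exact IsClopen.eq_univ ⟨(isCompact_range hg).isClosed, hopen⟩ (range_nonempty g)

theorem isCoveringMap_of_antipodal_fibers [FiniteDimensional ℝ E] (hg : Continuous g)
    (hsurj : Function.Surjective g) (hfib : ∀ x y, g x = g y ↔ x = y ∨ x = -y) :
    IsCoveringMap g := by
  have : CompactSpace (sphere (0 : E) 1) := isCompact_iff_compactSpace.1 (isCompact_sphere 0 1)
  let _ : MulAction ℤˣ (sphere (0 : E) 1) := antipodalAction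
  have hneg : ∀ x : sphere (0 : E) 1, (-1 : ℤˣ) • x = -x := fun x => if_neg (by decide)
  refine IsQuotientCoveringMap.isCoveringMap (f := g) (G := ℤˣ)
    { toIsQuotientMap := hg.isClosedMap.isQuotientMap hg hsurj
      toContinuousConstSMul := ⟨fun u => ?_⟩
      apply_eq_iff_mem_orbit := fun {x y} => ?_
      disjoint := fun x => ?_ }
  · rcases Int.units_eq_one_or u with rfl | rfl
    · simpa only [one_smul] using continuous_id'
    · simpa only [hneg] using continuous_neg
  · rw [hfib, MulAction.mem_orbit_iff]
    constructor
    · rintro (rfl | rfl)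
      · exact ⟨1, one_smul _ _⟩
      · exact ⟨-1, hneg y⟩
    · rintro ⟨u, rfl⟩
      rcases Int.units_eq_one_or u with rfl | rfl
      · exact .inl (one_smul _ _)
      · exact .inr (hneg y)
  · refine ⟨{y | 0 < inner ℝ (x : E) y},
      (isOpen_lt continuous_const (by fun_prop)).mem_nhds (by simp), fun u => ?_⟩
    rintro ⟨_, ⟨y, hy, rfl⟩, hy'⟩
    rcases Int.units_eq_one_or u with rfl | rfl
    · rfl
    · simp only [mem_ofPred_eq, hneg, coe_neg_sphere, inner_neg_right] at hy hy'
      linarith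

/-- Covering maps to the sphere have sections over the complement of a point. -/
theorem IsCoveringMap.exists_section_compl_singleton {X : Type*} [TopologicalSpace X]
    {p : X → sphere (0 : E) 1} (hp : IsCoveringMap p) (hsurj : Function.Surjective p)
    (v : sphere (0 : E) 1) :
    ∃ σ : sphere (0 : E) 1 → X, ContinuousOn σ {v}ᶜ ∧ ∀ x ≠ v, p (σ x) = x := by
  let e := stereographic (norm_eq_of_mem_sphere v)
  have hcont : Continuous e.symm := by
    simpa [e, ← continuousOn_univ] using e.continuousOn_symm
  obtain ⟨x₀, hx₀⟩ := hsurj (e.symm 0)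
  obtain ⟨s, ⟨-, hs⟩, -⟩ := hp.existsUnique_continuousMap_lifts ⟨e.symm, hcont⟩ 0 x₀ hx₀
  have hsource : e.source = {v}ᶜ := stereographic_source _
  refine ⟨fun x => s (e x), s.continuous.comp_continuousOn (hsource ▸ e.continuousOn),
    fun x hx => ?_⟩
  have h1 : p (s (e x)) = e.symm (e x) := congrFun hs (e x)
  rw [h1, e.left_inv (by rw [hsource]; exact hx)]

variable {d : ℕ} [Fact (Module.finrank ℝ E = d + 1)]

theorem isConnected_compl_pair_sphere (hd : 2 ≤ d) {v w : sphere (0 : E) 1} (hvw : w ≠ v) :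
    IsConnected ({v}ᶜ ∩ {w}ᶜ : Set (sphere (0 : E) 1)) := by
  let e := stereographic' d v
  have hsource : e.source = {v}ᶜ := stereographic'_source v
  have htarget : e.target = univ := stereographic'_target v
  have hcont : Continuous e.symm := by
    simpa [e, ← continuousOn_univ] using e.continuousOn_symm
  have hrank : 1 < Module.rank ℝ (EuclideanSpace ℝ (Fin d)) := by
    rw [← Module.finrank_eq_rank, finrank_euclideanSpace_fin]
    exact_mod_cast hd
  have himg : e.symm '' {e w}ᶜ = {v}ᶜ ∩ {w}ᶜ := by
    ext x
    constructor
    · rintro ⟨y, hy, rfl⟩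
      have hyt : y ∈ e.target := by simp [htarget]
      refine ⟨hsource ▸ e.map_target hyt, fun h => hy ?_⟩
      rw [mem_singleton_iff] at h ⊢
      rw [← h, e.right_inv hyt]
    · rintro ⟨hxv, hxw⟩
      refine ⟨e x, fun h => hxw ?_, e.left_inv (hsource ▸ hxv)⟩
      exact e.injOn (hsource ▸ hxv) (hsource ▸ hvw) h
  rw [← himg]
  exact (isConnected_compl_singleton_of_one_lt_rank hrank _).image _ hcont.continuousOn

/-- In dimension at least two, no continuous self-map of the sphere has the pairs of antipodal
points as its fibers. -/
theorem not_antipodal_fibers (hd : 2 ≤ d) (hg : Continuous g)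
    (hfib : ∀ x y, g x = g y ↔ x = y ∨ x = -y) : False := by
  have hfin : Module.finrank ℝ E = d + 1 := Fact.out
  have : FiniteDimensional ℝ E := Module.finite_of_finrank_eq_succ hfin
  have hrank : 1 < Module.rank ℝ E := by
    rw [← Module.finrank_eq_rank, hfin]
    exact_mod_cast (by omega : 1 < d + 1)
  have hconn := isConnected_sphere hrank (0 : E) zero_le_one
  have : PreconnectedSpace (sphere (0 : E) 1) :=
    isPreconnected_iff_preconnectedSpace.1 hconn.isPreconnected
  obtain ⟨v⟩ : Nonempty (sphere (0 : E) 1) := hconn.nonempty.to_subtype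
  have hsurj := surjective_of_antipodal_fibers hrank hg hfib
  have hcov := isCoveringMap_of_antipodal_fibers hg hsurj hfib
  have hgneg : ∀ x, g (-x) = g x := fun x => (hfib _ _).2 (.inr rfl)
  have hvw : -v ≠ v := (ne_neg_of_mem_unit_sphere ℝ v).symm
  have hoverlap := isConnected_compl_pair_sphere hd hvw
  obtain ⟨σ₁, hσ₁, hgσ₁⟩ := hcov.exists_section_compl_singleton hsurj v
  obtain ⟨z, hzv, hzw⟩ := hoverlap.nonempty
  -- a section over the complement of `-v` agreeing with `σ₁` at `z`
  obtain ⟨σ₂, hσ₂, hgσ₂, hz⟩ : ∃ σ : sphere (0 : E) 1 → sphere (0 : E) 1,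
      ContinuousOn σ {-v}ᶜ ∧ (∀ x ≠ -v, g (σ x) = x) ∧ σ₁ z = σ z := by
    obtain ⟨σ, hσ, hgσ⟩ := hcov.exists_section_compl_singleton hsurj (-v)
    rcases (hfib (σ₁ z) (σ z)).1 ((hgσ₁ z hzv).trans (hgσ z hzw).symm) with h | h
    · exact ⟨σ, hσ, hgσ, h⟩
    · exact ⟨fun x => -σ x, hσ.neg, fun x hx => (hgneg _).trans (hgσ x hx), h⟩
  have hagree : EqOn σ₁ σ₂ ({v}ᶜ ∩ {-v}ᶜ) :=
    hcov.eqOn_of_comp_eqOn hoverlap.isPreconnected (hσ₁.mono inter_subset_left)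
      (hσ₂.mono inter_subset_right)
      (fun x hx => (hgσ₁ x hx.1).trans (hgσ₂ x hx.2).symm) ⟨hzv, hzw⟩ hz
  obtain ⟨σ, hσ, hgσ⟩ : ∃ σ : sphere (0 : E) 1 → sphere (0 : E) 1,
      Continuous σ ∧ ∀ x, g (σ x) = x := by
    classical
    let σ : sphere (0 : E) 1 → sphere (0 : E) 1 := fun x => if x = v then σ₂ x else σ₁ x
    have h1 : EqOn σ σ₁ {v}ᶜ := fun x hx => if_neg hx
    have h2 : EqOn σ σ₂ {-v}ᶜ := fun x hx => by
      by_cases hxv : x = v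
      · exact if_pos hxv
      · exact (if_neg hxv).trans (hagree ⟨hxv, hx⟩)
    refine ⟨σ, continuous_iff_continuousAt.2 fun x => ?_, fun x => ?_⟩
    · by_cases hxv : x = v
      · exact (hσ₂.congr h2).continuousAt
          (isOpen_compl_singleton.mem_nhds (by rw [hxv]; exact hvw.symm))
      · exact (hσ₁.congr h1).continuousAt (isOpen_compl_singleton.mem_nhds hxv)
    · by_cases hxv : x = v
      · rw [h2 (by rw [hxv]; exact hvw.symm)]
        exact hgσ₂ x (by rw [hxv]; exact hvw.symm)
      · rw [h1 hxv, hgσ₁ x hxv]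
  have hlift : g ∘ (fun x => σ (g x)) = g ∘ id := funext fun x => hgσ (g x)
  have hlift' : g ∘ (fun x => σ (g x)) = g ∘ Neg.neg :=
    funext fun x => (hgσ (g x)).trans (hgneg x).symm
  have hσg : σ (g (-v)) = σ (g v) := by rw [hgneg]
  rcases (hfib (σ (g v)) v).1 (hgσ _) with h | h
  · have heq := hcov.eq_of_comp_eq (hσ.comp hg) continuous_id hlift v h
    have h1 : σ (g (-v)) = -v := congrFun heq (-v)
    exact hvw (by rw [← h1, hσg, h])
  · have heq := hcov.eq_of_comp_eq (hσ.comp hg) continuous_neg hlift' v h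
    have h1 : σ (g (-v)) = - -v := congrFun heq (-v)
    exact hvw (by rw [← h, ← hσg, h1, neg_neg])

end AntipodalFibers

theorem le_two_of_exists_continuous_injective (n : ℕ) (hn : 1 ≤ n)
    (h : ∃ f : RealProjSpace n → sphere (0 : EuclideanSpace ℝ (Fin n)) 1,
      Continuous f ∧ Function.Injective f) :
    n ≤ 2 := by
  obtain ⟨f, hf, hinj⟩ := h
  by_contra! hn2
  obtain ⟨d, rfl⟩ : ∃ d, n = d + 1 := ⟨n - 1, by omega⟩
  have : Fact (Module.finrank ℝ (EuclideanSpace ℝ (Fin (d + 1))) = d + 1) :=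
    ⟨finrank_euclideanSpace_fin⟩
  let q : sphere (0 : EuclideanSpace ℝ (Fin (d + 1))) 1 → RealProjSpace (d + 1) :=
    Quotient.mk (antipodalSetoid (d + 1))
  have hq : Continuous q := continuous_quotient_mk'
  refine not_antipodal_fibers (d := d) (g := fun x => f (q x)) (by omega) (hf.comp hq)
    fun x y => ?_
  rw [hinj.eq_iff, Subtype.ext_iff (a1 := x) (a2 := y), Subtype.ext_iff (a2 := -y)]
  exact Quotient.eq
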